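/- arXiv:2005.10175 — 9 statements merged into one kernel-verified Lean document; each statement's English description precedes it below -/
import Mathlib

section
/- For every θ₁, θ₂ ∈ ℝ^N and every a ∈ A, the softmax policy satisfies |π_{θ₁}(a) − π_{θ₂}(a)| ≤ 2σ‖θ₁ − θ₂‖, i.e., for each fixed a the map θ ↦ π_θ(a) is 2σ-Lipschitz. -/
open scoped RealInnerProductSpace BigOperators

/-- The softmax policy is `2σ`-Lipschitz in the parameter `θ`:
for all `θ₁, θ₂` and every action `a`,
`|π_{θ₁}(a) − π_{θ₂}(a)| ≤ 2σ‖θ₁ − θ₂‖`. -/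
theorem softmax_lipschitz (N : ℕ) {A : Type*} [Fintype A] [Nonempty A]
    (φ : A → EuclideanSpace ℝ (Fin N)) (hφ : ∀ a, ‖φ a‖ ≤ 1)
    (σ : ℝ) (hσ : 0 < σ)
    (pol : EuclideanSpace ℝ (Fin N) → A → ℝ)
    (hpol : ∀ θ a, pol θ a =
      Real.exp (σ * ⟪θ, φ a⟫) / ∑ a' : A, Real.exp (σ * ⟪θ, φ a'⟫))
    (θ₁ θ₂ : EuclideanSpace ℝ (Fin N)) (a : A) :
    |pol θ₁ a - pol θ₂ a| ≤ 2 * σ * ‖θ₁ - θ₂‖ := by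
  have key : ∀ θ η : EuclideanSpace ℝ (Fin N),
      pol θ a - pol η a ≤ 2 * σ * ‖θ - η‖ := by
    intro θ η
    have hd : ∀ (u v : EuclideanSpace ℝ (Fin N)) (b : A),
        σ * ⟪u, φ b⟫ ≤ σ * ⟪v, φ b⟫ + σ * ‖u - v‖ := by
      intro u v b
      have h1 : ⟪u - v, φ b⟫ ≤ ‖u - v‖ * ‖φ b‖ := real_inner_le_norm _ _
      have h2 : ‖u - v‖ * ‖φ b‖ ≤ ‖u - v‖ :=
        mul_le_of_le_one_right (norm_nonneg _) (hφ b)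
      rw [inner_sub_left] at h1
      have h3 : ⟪u, φ b⟫ ≤ ⟪v, φ b⟫ + ‖u - v‖ := by linarith
      have := mul_le_mul_of_nonneg_left h3 hσ.le
      linarith
    have hpos : ∀ u : EuclideanSpace ℝ (Fin N),
        0 < ∑ a' : A, Real.exp (σ * ⟪u, φ a'⟫) := fun u =>
      Finset.sum_pos (fun _ _ => Real.exp_pos _) Finset.univ_nonempty
    have hle : pol θ a ≤ 1 := by
      rw [hpol, div_le_one (hpos θ)]
      exact Finset.single_le_sum (f := fun a' => Real.exp (σ * ⟪θ, φ a'⟫))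
        (fun _ _ => (Real.exp_pos _).le) (Finset.mem_univ a)
    have hnn : 0 ≤ pol θ a := by
      rw [hpol]
      exact div_nonneg (Real.exp_pos _).le (hpos θ).le
    set d := σ * ‖θ - η‖ with hdd
    have hd0 : 0 ≤ d := mul_nonneg hσ.le (norm_nonneg _)
    have hS : ∑ a' : A, Real.exp (σ * ⟪η, φ a'⟫)
        ≤ (∑ a' : A, Real.exp (σ * ⟪θ, φ a'⟫)) * Real.exp d := by
      rw [Finset.sum_mul]
      refine Finset.sum_le_sum fun b _ => ?_
      rw [← Real.exp_add, Real.exp_le_exp]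
      have := hd η θ b
      rwa [norm_sub_rev] at this
    have hE : Real.exp (σ * ⟪θ, φ a⟫) * Real.exp (-d) ≤ Real.exp (σ * ⟪η, φ a⟫) := by
      rw [← Real.exp_add, Real.exp_le_exp]
      have := hd θ η a
      linarith
    have hm : pol θ a * Real.exp (-(2 * d)) ≤ pol η a := by
      have h1 := div_le_div₀ (Real.exp_pos _).le hE (hpos η) hS
      rw [← hpol, mul_div_mul_comm, ← hpol, ← Real.exp_sub] at h1
      have h2 : -d - d = -(2 * d) := by ring
      rwa [h2] at h1
    have h3 := Real.add_one_le_exp (-(2 * d))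
    have h4 := mul_le_mul_of_nonneg_left h3 hnn
    have h5 : 2 * σ * ‖θ - η‖ = 2 * d := by rw [hdd]; ring
    rw [h5]
    nlinarith
  rw [abs_le]
  have h1 := key θ₁ θ₂
  have h2 := key θ₂ θ₁
  rw [norm_sub_rev] at h2
  constructor <;> linarith
end

section
/- For every θ ∈ ℝ^N and every a ∈ A, the map θ ↦ π_θ(a) is twice differentiable and its second derivative (Hessian), viewed as a linear operator on ℝ^N, has operator norm at most 8σ²: ‖∇²π_θ(a)‖ ≤ 8σ². -/
open scoped RealInnerProductSpace BigOperators

lemma softmax_hasFDerivAt (N : ℕ) {A : Type*} [Fintype A] [Nonempty A]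
    (φ : A → EuclideanSpace ℝ (Fin N)) (σ : ℝ)
    (pol : EuclideanSpace ℝ (Fin N) → A → ℝ)
    (hpol : ∀ θ a, pol θ a =
      Real.exp (σ * ⟪θ, φ a⟫) / ∑ a' : A, Real.exp (σ * ⟪θ, φ a'⟫))
    (θ : EuclideanSpace ℝ (Fin N)) (a : A) :
    HasFDerivAt (fun θ' => pol θ' a)
      (innerSL ℝ ((σ * pol θ a) • (φ a - ∑ b, pol θ b • φ b))) θ := by
  have hZ : 0 < ∑ a' : A, Real.exp (σ * ⟪θ, φ a'⟫) :=
    Finset.sum_pos (fun _ _ => Real.exp_pos _) Finset.univ_nonempty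
  have he : ∀ b, HasFDerivAt (fun θ' : EuclideanSpace ℝ (Fin N) => Real.exp (σ * ⟪θ', φ b⟫))
      ((Real.exp (σ * ⟪θ, φ b⟫)) • (σ • innerSL ℝ (φ b))) θ := by
    intro b
    have h1 : HasFDerivAt (fun θ' : EuclideanSpace ℝ (Fin N) => σ * ⟪θ', φ b⟫)
        (σ • innerSL ℝ (φ b)) θ := by
      have := ((innerSL ℝ (φ b)).hasFDerivAt (x := θ)).const_mul σ
      refine this.congr_of_eventuallyEq (Filter.Eventually.of_forall fun x => ?_)
      simp [real_inner_comm]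
    exact h1.exp
  have hs := HasFDerivAt.fun_sum (u := Finset.univ) (fun b _ => he b)
  have hi := (hasDerivAt_inv hZ.ne').comp_hasFDerivAt θ hs
  have hm := (he a).mul hi
  have hf : (fun θ' => pol θ' a) = fun θ' => Real.exp (σ * ⟪θ', φ a⟫) *
      (∑ a' : A, Real.exp (σ * ⟪θ', φ a'⟫))⁻¹ := by
    funext x; rw [hpol, div_eq_mul_inv]
  rw [hf]
  refine hm.congr_fderiv ?_
  ext v
  have hp : ∑ b, pol θ b * ⟪φ b, v⟫ = (∑ b, Real.exp (σ * ⟪θ, φ b⟫) * ⟪φ b, v⟫) /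
      ∑ a' : A, Real.exp (σ * ⟪θ, φ a'⟫) := by
    rw [Finset.sum_div]
    exact Finset.sum_congr rfl fun b _ => by rw [hpol]; ring
  have hq : ∑ b, Real.exp (σ * ⟪θ, φ b⟫) * (σ * ⟪φ b, v⟫) =
      σ * ∑ b, Real.exp (σ * ⟪θ, φ b⟫) * ⟪φ b, v⟫ := by
    rw [Finset.mul_sum]
    exact Finset.sum_congr rfl fun b _ => by ring
  simp only [innerSL_apply_apply, inner_smul_left, inner_sub_left, sum_inner, ContinuousLinearMap.add_apply,
    ContinuousLinearMap.smul_apply, ContinuousLinearMap.sum_apply, smul_eq_mul, Function.comp,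
    RCLike.conj_to_real, hp, hq, hpol θ a]
  field_simp
  ring

/-- The softmax policy `θ ↦ π_θ(a)` is twice differentiable and its Hessian,
viewed as a linear operator on `ℝ^N`, has operator norm at most `8σ²`. -/
theorem softmax_hessian_bound (N : ℕ) {A : Type*} [Fintype A] [Nonempty A]
    (φ : A → EuclideanSpace ℝ (Fin N)) (hφ : ∀ a, ‖φ a‖ ≤ 1)
    (σ : ℝ) (hσ : 0 < σ)
    (pol : EuclideanSpace ℝ (Fin N) → A → ℝ)
    (hpol : ∀ θ a, pol θ a =
      Real.exp (σ * ⟪θ, φ a⟫) / ∑ a' : A, Real.exp (σ * ⟪θ, φ a'⟫))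
    (θ : EuclideanSpace ℝ (Fin N)) (a : A) :
    DifferentiableAt ℝ (fun θ' => pol θ' a) θ ∧
      DifferentiableAt ℝ (fun θ' => gradient (fun θ'' => pol θ'' a) θ') θ ∧
      ‖fderiv ℝ (fun θ' => gradient (fun θ'' => pol θ'' a) θ') θ‖ ≤ 8 * σ ^ 2 := by
  have hd := softmax_hasFDerivAt N φ σ pol hpol
  have hg : (fun θ' => gradient (fun θ'' => pol θ'' a) θ') =
      fun θ' => (σ * pol θ' a) • (φ a - ∑ b, pol θ' b • φ b) := by
    funext x
    apply HasGradientAt.gradient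
    rw [hasGradientAt_iff_hasFDerivAt]
    exact hd x a
  have hZ : 0 < ∑ a' : A, Real.exp (σ * ⟪θ, φ a'⟫) :=
    Finset.sum_pos (fun _ _ => Real.exp_pos _) Finset.univ_nonempty
  have hp0 : ∀ b, 0 ≤ pol θ b := fun b => by rw [hpol]; positivity
  have hsum : ∑ b, pol θ b = 1 := by
    simp only [hpol]
    rw [← Finset.sum_div, div_self hZ.ne']
  have hp1 : pol θ a ≤ 1 := by
    rw [← hsum]; exact Finset.single_le_sum (fun b _ => hp0 b) (Finset.mem_univ a)
  have hm : ‖∑ b, pol θ b • φ b‖ ≤ 1 := by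
    rw [← hsum]
    refine norm_sum_le_of_le _ fun b _ => ?_
    rw [norm_smul, Real.norm_of_nonneg (hp0 b)]
    exact mul_le_of_le_one_right (hp0 b) (hφ b)
  have hdiff : ∀ b, ‖φ b - ∑ b, pol θ b • φ b‖ ≤ 2 := fun b =>
    (norm_sub_le _ _).trans (by linarith [hφ b])
  have hD : ∀ b v, ‖innerSL ℝ ((σ * pol θ b) • (φ b - ∑ b, pol θ b • φ b)) v‖
      ≤ pol θ b * (2 * σ * ‖v‖) := by
    intro b v
    rw [innerSL_apply_apply]
    refine (norm_inner_le_norm _ _).trans ?_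
    rw [norm_smul, Real.norm_of_nonneg (mul_nonneg hσ.le (hp0 b))]
    have := mul_le_mul_of_nonneg_left (hdiff b)
      (mul_nonneg (mul_nonneg hσ.le (hp0 b)) (norm_nonneg v))
    linarith
  have hs := HasFDerivAt.fun_sum (u := Finset.univ) (fun b _ => (hd θ b).smul_const (φ b))
  have hG := ((hd θ a).const_mul σ).smul (hs.const_sub (φ a))
  rw [hg]
  refine ⟨(hd θ a).differentiableAt, hG.differentiableAt, ?_⟩
  have hfd := hG.fderiv
  refine (congrArg norm hfd).trans_le ?_
  refine ContinuousLinearMap.opNorm_le_bound _ (by positivity) fun v => ?_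
  have hms : ‖∑ b, (innerSL ℝ ((σ * pol θ b) • (φ b - ∑ b, pol θ b • φ b)) v) • φ b‖
      ≤ 2 * σ * ‖v‖ := by
    calc _ ≤ ∑ b, pol θ b * (2 * σ * ‖v‖) := by
          refine norm_sum_le_of_le _ fun b _ => ?_
          rw [norm_smul]
          exact (mul_le_of_le_one_right (norm_nonneg _) (hφ b)).trans (hD b v)
      _ = _ := by rw [← Finset.sum_mul, hsum, one_mul]
  have hDa : ‖innerSL ℝ ((σ * pol θ a) • (φ a - ∑ b, pol θ b • φ b)) v‖ ≤ 2 * σ * ‖v‖ :=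
    (hD a v).trans (mul_le_of_le_one_left (by positivity) hp1)
  have hda := hdiff a
  simp only [ContinuousLinearMap.add_apply, ContinuousLinearMap.smul_apply,
    ContinuousLinearMap.sum_apply, ContinuousLinearMap.smulRight_apply,
    ContinuousLinearMap.neg_apply]
  generalize (∑ b, (innerSL ℝ ((σ * pol θ b) • (φ b - ∑ b, pol θ b • φ b)) v) • φ b) = S at *
  generalize innerSL ℝ ((σ * pol θ a) • (φ a - ∑ b, pol θ b • φ b)) v = d at *
  generalize φ a - ∑ b, pol θ b • φ b = w at *
  have e1 : ‖(σ * pol θ a) • -S‖ ≤ σ * (2 * σ * ‖v‖) := by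
    rw [norm_smul, norm_neg, Real.norm_of_nonneg (mul_nonneg hσ.le (hp0 a))]
    exact mul_le_mul (mul_le_of_le_one_right hσ.le hp1) hms (norm_nonneg _) hσ.le
  have e2 : ‖(σ • d) • w‖ ≤ (σ * (2 * σ * ‖v‖)) * 2 := by
    rw [norm_smul, norm_smul, Real.norm_of_nonneg hσ.le]
    exact mul_le_mul (mul_le_mul_of_nonneg_left hDa hσ.le) hda (norm_nonneg _) (by positivity)
  refine (norm_add_le_of_le e1 e2).trans ?_
  have : 0 ≤ σ ^ 2 * ‖v‖ := by positivity
  nlinarith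
end

section
/- For every θ₁, θ₂ ∈ ℝ^N and every a ∈ A, the gradients of the softmax policy satisfy ‖∇π_{θ₁}(a) − ∇π_{θ₂}(a)‖ ≤ 8σ²‖θ₁ − θ₂‖, i.e., the softmax policy is 8σ²-smooth. -/
open scoped RealInnerProductSpace BigOperators


section helper

variable {E : Type*} [NormedAddCommGroup E] [InnerProductSpace ℝ E] {A : Type*} [Fintype A]

noncomputable def smP (φ : A → E) (σ : ℝ) (a : A) (θ : E) : ℝ :=
  Real.exp (σ * ⟪θ, φ a⟫) / ∑ a' : A, Real.exp (σ * ⟪θ, φ a'⟫)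

noncomputable def smM (φ : A → E) (σ : ℝ) (θ : E) : E := ∑ b, smP φ σ b θ • φ b

variable [Nonempty A]

lemma smZ_pos (φ : A → E) (σ : ℝ) (θ : E) : 0 < ∑ a' : A, Real.exp (σ * ⟪θ, φ a'⟫) :=
  Finset.sum_pos (fun _ _ => Real.exp_pos _) Finset.univ_nonempty

lemma smP_nonneg (φ : A → E) (σ : ℝ) (a : A) (θ : E) : 0 ≤ smP φ σ a θ :=
  div_nonneg (Real.exp_pos _).le (smZ_pos φ σ θ).le

lemma smP_sum (φ : A → E) (σ : ℝ) (θ : E) : ∑ a, smP φ σ a θ = 1 := by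
  unfold smP
  rw [← Finset.sum_div, div_self (smZ_pos φ σ θ).ne']

lemma smP_le_one (φ : A → E) (σ : ℝ) (a : A) (θ : E) : smP φ σ a θ ≤ 1 := by
  rw [← smP_sum φ σ θ]
  exact Finset.single_le_sum (f := fun a => smP φ σ a θ) (fun b _ => smP_nonneg φ σ b θ) (Finset.mem_univ a)

lemma smM_norm (φ : A → E) (hφ : ∀ a, ‖φ a‖ ≤ 1) (σ : ℝ) (θ : E) : ‖smM φ σ θ‖ ≤ 1 := by
  unfold smM
  refine (norm_sum_le _ _).trans ?_
  rw [← smP_sum φ σ θ]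
  refine Finset.sum_le_sum fun b _ => ?_
  rw [norm_smul, Real.norm_of_nonneg (smP_nonneg φ σ b θ)]
  exact mul_le_of_le_one_right (smP_nonneg φ σ b θ) (hφ b)

lemma smP_fderiv (φ : A → E) (σ : ℝ) (a : A) (θ : E) :
    HasFDerivAt (smP φ σ a) (innerSL ℝ ((σ * smP φ σ a θ) • (φ a - smM φ σ θ))) θ := by
  have h1 : ∀ b, HasFDerivAt (fun θ : E => Real.exp (σ * ⟪θ, φ b⟫))
      (Real.exp (σ * ⟪θ, φ b⟫) • (σ • innerSL ℝ (φ b))) θ := by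
    intro b
    have : HasFDerivAt (fun θ : E => ⟪θ, φ b⟫) (innerSL ℝ (φ b)) θ := by
      have := (innerSL ℝ (φ b)).hasFDerivAt (x := θ)
      refine this.congr_of_eventuallyEq (Filter.Eventually.of_forall fun x => ?_)
      simp [real_inner_comm]
    exact (this.const_mul σ).exp
  have h2 : HasFDerivAt (fun θ : E => ∑ b, Real.exp (σ * ⟪θ, φ b⟫))
      (∑ b, Real.exp (σ * ⟪θ, φ b⟫) • (σ • innerSL ℝ (φ b))) θ :=
    HasFDerivAt.fun_sum fun b _ => h1 b
  have hZ := (smZ_pos φ σ θ).ne'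
  have h3 := HasFDerivAt.fun_mul (h1 a) ((hasDerivAt_inv hZ).comp_hasFDerivAt θ h2)
  refine h3.congr_fderiv ?_
  ext v
  have hm : ⟪smM φ σ θ, v⟫ = (∑ b, Real.exp (σ * ⟪θ, φ b⟫) * ⟪φ b, v⟫) / ∑ b, Real.exp (σ * ⟪θ, φ b⟫) := by
    simp only [smM, sum_inner, real_inner_smul_left, smP, Finset.sum_div]
    exact Finset.sum_congr rfl fun b _ => by ring
  have hs : (∑ b, Real.exp (σ * ⟪θ, φ b⟫) * (σ * ⟪φ b, v⟫)) = σ * ∑ b, Real.exp (σ * ⟪θ, φ b⟫) * ⟪φ b, v⟫ := by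
    rw [Finset.mul_sum]
    exact Finset.sum_congr rfl fun b _ => by ring
  simp only [innerSL_apply_apply, real_inner_smul_left, inner_sub_left, hm, smP,
    ContinuousLinearMap.smul_apply, ContinuousLinearMap.add_apply, Function.comp_apply, ContinuousLinearMap.sum_apply,
    smul_eq_mul, hs]
  field_simp
  ring

lemma smG_norm (φ : A → E) (hφ : ∀ a, ‖φ a‖ ≤ 1) (σ : ℝ) (hσ : 0 < σ) (a : A) (θ : E) :
    ‖(σ * smP φ σ a θ) • (φ a - smM φ σ θ)‖ ≤ 2 * σ * smP φ σ a θ := by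
  have h0 := mul_nonneg hσ.le (smP_nonneg φ σ a θ)
  rw [norm_smul, Real.norm_of_nonneg h0]
  have : ‖φ a - smM φ σ θ‖ ≤ 2 := by
    linarith [norm_sub_le (φ a) (smM φ σ θ), hφ a, smM_norm φ hφ σ θ]
  nlinarith

lemma smP_lip (φ : A → E) (hφ : ∀ a, ‖φ a‖ ≤ 1) (σ : ℝ) (hσ : 0 < σ) (a : A) (x y : E) :
    ‖smP φ σ a x - smP φ σ a y‖ ≤ 2 * σ * ‖x - y‖ := by
  refine convex_univ.norm_image_sub_le_of_norm_hasFDerivWithin_le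
    (fun θ _ => (smP_fderiv φ σ a θ).hasFDerivWithinAt) (fun θ _ => ?_) (Set.mem_univ _) (Set.mem_univ _)
  rw [innerSL_apply_norm]
  refine (smG_norm φ hφ σ hσ a θ).trans ?_
  exact mul_le_of_le_one_right (by positivity) (smP_le_one φ σ a θ)

lemma smM_lip (φ : A → E) (hφ : ∀ a, ‖φ a‖ ≤ 1) (σ : ℝ) (hσ : 0 < σ) (x y : E) :
    ‖smM φ σ x - smM φ σ y‖ ≤ 2 * σ * ‖x - y‖ := by
  have hd : ∀ θ, HasFDerivAt (smM φ σ)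
      (∑ b, (innerSL ℝ ((σ * smP φ σ b θ) • (φ b - smM φ σ θ))).smulRight (φ b)) θ := fun θ =>
    HasFDerivAt.fun_sum fun b _ => (smP_fderiv φ σ b θ).smul_const (φ b)
  refine convex_univ.norm_image_sub_le_of_norm_hasFDerivWithin_le
    (fun θ _ => (hd θ).hasFDerivWithinAt) (fun θ _ => ?_) (Set.mem_univ _) (Set.mem_univ _)
  refine (norm_sum_le _ _).trans ?_
  calc _ ≤ ∑ b, 2 * σ * smP φ σ b θ := by
        refine Finset.sum_le_sum fun b _ => ?_
        rw [ContinuousLinearMap.norm_smulRight_apply, innerSL_apply_norm]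
        exact (mul_le_of_le_one_right (norm_nonneg _) (hφ b)).trans (smG_norm φ hφ σ hσ b θ)
    _ = 2 * σ := by rw [← Finset.mul_sum, smP_sum, mul_one]

end helper

/-- The softmax policy is `8σ²`-smooth: for all `θ₁, θ₂` and every action `a`,
`‖∇π_{θ₁}(a) − ∇π_{θ₂}(a)‖ ≤ 8σ²‖θ₁ − θ₂‖`. -/
theorem softmax_smooth (N : ℕ) {A : Type*} [Fintype A] [Nonempty A]
    (φ : A → EuclideanSpace ℝ (Fin N)) (hφ : ∀ a, ‖φ a‖ ≤ 1)
    (σ : ℝ) (hσ : 0 < σ)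
    (pol : EuclideanSpace ℝ (Fin N) → A → ℝ)
    (hpol : ∀ θ a, pol θ a =
      Real.exp (σ * ⟪θ, φ a⟫) / ∑ a' : A, Real.exp (σ * ⟪θ, φ a'⟫))
    (θ₁ θ₂ : EuclideanSpace ℝ (Fin N)) (a : A) :
    ‖gradient (fun θ' => pol θ' a) θ₁ - gradient (fun θ' => pol θ' a) θ₂‖ ≤
      8 * σ ^ 2 * ‖θ₁ - θ₂‖ := by
  have hf : (fun θ' => pol θ' a) = smP φ σ a := by
    funext θ
    rw [hpol, smP]
  have hg : ∀ θ, gradient (smP φ σ a) θ = (σ * smP φ σ a θ) • (φ a - smM φ σ θ) := fun θ =>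
    HasGradientAt.gradient (smP_fderiv φ σ a θ)
  rw [hf, hg, hg]
  have e : (σ * smP φ σ a θ₁) • (φ a - smM φ σ θ₁) - (σ * smP φ σ a θ₂) • (φ a - smM φ σ θ₂)
      = σ • ((smP φ σ a θ₁ - smP φ σ a θ₂) • (φ a - smM φ σ θ₁)
        - smP φ σ a θ₂ • (smM φ σ θ₁ - smM φ σ θ₂)) := by module
  rw [e, norm_smul, Real.norm_of_nonneg hσ.le]
  have h1 : ‖(smP φ σ a θ₁ - smP φ σ a θ₂) • (φ a - smM φ σ θ₁)‖ ≤ (2 * σ * ‖θ₁ - θ₂‖) * 2 := by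
    rw [norm_smul]
    refine mul_le_mul (smP_lip φ hφ σ hσ a θ₁ θ₂) ?_ (norm_nonneg _) (by positivity)
    linarith [norm_sub_le (φ a) (smM φ σ θ₁), hφ a, smM_norm φ hφ σ θ₁]
  have h2 : ‖smP φ σ a θ₂ • (smM φ σ θ₁ - smM φ σ θ₂)‖ ≤ 2 * σ * ‖θ₁ - θ₂‖ := by
    rw [norm_smul, Real.norm_of_nonneg (smP_nonneg φ σ a θ₂)]
    exact (mul_le_of_le_one_left (norm_nonneg _) (smP_le_one φ σ a θ₂)).trans
      (smM_lip φ hφ σ hσ θ₁ θ₂)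
  have h3 := (norm_sub_le _ _).trans (add_le_add h1 h2)
  have h4 := mul_le_mul_of_nonneg_left h3 hσ.le
  refine h4.trans ?_
  have : 0 ≤ σ ^ 2 * ‖θ₁ - θ₂‖ := by positivity
  nlinarith
end

section
/- For every θ ∈ ℝ^N and all a, a' ∈ A, the function h(θ) = exp(σ⟨θ, φ_a + φ_{a'}⟩) / ( Σ_{b∈A} exp(σ⟨θ, φ_b⟩) )² is differentiable and its gradient satisfies ‖∇h(θ)‖ ≤ 4σ. -/
open scoped RealInnerProductSpace BigOperators

/-- The function `h(θ) = e^{σ⟨θ, φ_a + φ_{a'}⟩} / (Σ_b e^{σ⟨θ, φ_b⟩})²` is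
differentiable with `‖∇h(θ)‖ ≤ 4σ`. -/
theorem softmax_ratio_gradient_bound (N : ℕ) {A : Type*} [Fintype A] [Nonempty A]
    (φ : A → EuclideanSpace ℝ (Fin N)) (hφ : ∀ a, ‖φ a‖ ≤ 1)
    (σ : ℝ) (hσ : 0 < σ) (a a' : A)
    (h : EuclideanSpace ℝ (Fin N) → ℝ)
    (hh : ∀ θ, h θ = Real.exp (σ * ⟪θ, φ a + φ a'⟫) /
      (∑ b : A, Real.exp (σ * ⟪θ, φ b⟫)) ^ 2)
    (θ : EuclideanSpace ℝ (Fin N)) :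
    DifferentiableAt ℝ h θ ∧ ‖gradient h θ‖ ≤ 4 * σ := by
  have hin : ∀ v : EuclideanSpace ℝ (Fin N), HasFDerivAt
      (fun t : EuclideanSpace ℝ (Fin N) => Real.exp (σ * ⟪t, v⟫))
      (Real.exp (σ * ⟪θ, v⟫) • (σ • innerSL ℝ v)) θ := by
    intro v
    have h1 : HasFDerivAt (fun t : EuclideanSpace ℝ (Fin N) => ⟪t, v⟫) (innerSL ℝ v) θ := by
      have h2 := (innerSL ℝ v).hasFDerivAt (x := θ)
      refine h2.congr_of_eventuallyEq (Filter.Eventually.of_forall fun t => ?_)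
      simp [real_inner_comm]
    exact (h1.const_mul σ).exp
  have hS : HasFDerivAt (fun t : EuclideanSpace ℝ (Fin N) => ∑ b : A, Real.exp (σ * ⟪t, φ b⟫))
      (∑ b : A, Real.exp (σ * ⟪θ, φ b⟫) • (σ • innerSL ℝ (φ b))) θ :=
    HasFDerivAt.fun_sum fun b _ => hin (φ b)
  have hfun : h = fun t => Real.exp (σ * ⟪t, φ a + φ a'⟫) /
      (∑ b : A, Real.exp (σ * ⟪t, φ b⟫)) ^ 2 := funext hh
  set S : ℝ := ∑ b : A, Real.exp (σ * ⟪θ, φ b⟫) with hSdef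
  have hSpos : 0 < S := Finset.sum_pos (fun b _ => Real.exp_pos _) Finset.univ_nonempty
  have hle : ∀ b, Real.exp (σ * ⟪θ, φ b⟫) ≤ S := fun b =>
    Finset.single_le_sum (f := fun b => Real.exp (σ * ⟪θ, φ b⟫))
      (fun b _ => (Real.exp_pos _).le) (Finset.mem_univ b)
  set E : ℝ := Real.exp (σ * ⟪θ, φ a + φ a'⟫) with hEdef
  have hEpos : 0 < E := Real.exp_pos _
  have hE : E ≤ S ^ 2 := by
    rw [hEdef, inner_add_right, mul_add, Real.exp_add, pow_two]
    exact mul_le_mul (hle a) (hle a') (Real.exp_pos _).le hSpos.le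
  have hP : HasDerivAt (fun y : ℝ => (y ^ 2)⁻¹) (-2 / S ^ 3) S := by
    have h7 := (hasDerivAt_pow 2 S).fun_inv (pow_ne_zero 2 hSpos.ne')
    refine h7.congr_deriv ?_
    have h8 := hSpos.ne'
    push_cast
    field_simp
    try norm_num
  have hI := HasDerivAt.comp_hasFDerivAt (h₂ := fun y : ℝ => (y ^ 2)⁻¹) θ hP hS
  have hD := (hin (φ a + φ a')).fun_mul hI
  simp only [Function.comp_apply, ← div_eq_mul_inv] at hD
  rw [← hfun] at hD
  refine ⟨hD.differentiableAt, ?_⟩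
  rw [gradient, LinearIsometryEquiv.norm_map, hD.fderiv]
  refine ContinuousLinearMap.opNorm_le_bound _ (by positivity) fun x => ?_
  have hip : ∀ b, |⟪φ b, x⟫| ≤ ‖x‖ := fun b =>
    (abs_real_inner_le_norm _ _).trans (mul_le_of_le_one_left (norm_nonneg _) (hφ b))
  set T : ℝ := ∑ b : A, Real.exp (σ * ⟪θ, φ b⟫) * ⟪φ b, x⟫ with hT
  have hTb : |T| ≤ S * ‖x‖ := by
    rw [hT, hSdef, Finset.sum_mul]
    refine (Finset.abs_sum_le_sum_abs _ _).trans (Finset.sum_le_sum fun b _ => ?_)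
    rw [abs_mul, abs_of_pos (Real.exp_pos _)]
    exact mul_le_mul_of_nonneg_left (hip b) (Real.exp_pos _).le
  have hTs : (∑ b : A, Real.exp (σ * ⟪θ, φ b⟫) * (σ * ⟪φ b, x⟫)) = σ * T := by
    rw [hT, Finset.mul_sum]
    exact Finset.sum_congr rfl fun b _ => by ring
  have hTS : |T / S| ≤ ‖x‖ := by
    rw [abs_div, abs_of_pos hSpos, div_le_iff₀ hSpos, mul_comm]
    exact hTb
  have hES : E / S ^ 2 ≤ 1 := (div_le_one (by positivity)).2 hE
  have hES0 : 0 ≤ E / S ^ 2 := by positivity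
  have key : ‖(E / S ^ 2) * (σ * (⟪φ a, x⟫ + ⟪φ a', x⟫ - 2 * (T / S)))‖ ≤ 4 * σ * ‖x‖ := by
    rw [norm_mul, norm_mul, Real.norm_of_nonneg hES0, Real.norm_of_nonneg hσ.le, Real.norm_eq_abs]
    have h3 : |⟪φ a, x⟫ + ⟪φ a', x⟫ - 2 * (T / S)| ≤ 4 * ‖x‖ := by
      have h4 := abs_le.1 (hip a)
      have h5 := abs_le.1 (hip a')
      have h6 := abs_le.1 hTS
      rw [abs_le]
      constructor <;> linarith
    calc _ ≤ 1 * (σ * (4 * ‖x‖)) := by gcongr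
      _ = _ := by ring
  refine le_of_eq_of_le (congrArg norm ?_) key
  simp [-map_add, sum_apply, hTs, inner_add_left]
  field_simp
  try ring
end

section
/- For all θ₁, θ₂ ∈ ℝ^N with ‖θ₁‖ ≤ R and ‖θ₂‖ ≤ R, the temporal-difference error satisfies |δ(θ₁) − δ(θ₂)| ≤ (1 + γ + γ R |A| k₁)‖θ₁ − θ₂‖, where |A| is the cardinality of A. -/
open scoped RealInnerProductSpace BigOperators

/-- Lipschitz continuity of the temporal-difference error: for `‖θ₁‖ ≤ R`, `‖θ₂‖ ≤ R`,
`|δ(θ₁) − δ(θ₂)| ≤ (1 + γ + γR|A|k₁)‖θ₁ − θ₂‖`. -/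
theorem td_error_lipschitz (N : ℕ) {A : Type*} [Fintype A] [Nonempty A]
    (φ : EuclideanSpace ℝ (Fin N)) (hφ : ‖φ‖ ≤ 1)
    (φ' : A → EuclideanSpace ℝ (Fin N)) (hφ' : ∀ a, ‖φ' a‖ ≤ 1)
    (γ : ℝ) (hγ : γ ∈ Set.Ioo (0 : ℝ) 1)
    (r rmax : ℝ) (hr : 0 ≤ r) (hrmax : r ≤ rmax)
    (pol : EuclideanSpace ℝ (Fin N) → A → ℝ)
    (hpol_nonneg : ∀ θ a, 0 ≤ pol θ a)
    (hpol_sum : ∀ θ, ∑ a : A, pol θ a = 1)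
    (k₁ : ℝ)
    (hpol_lip : ∀ θ₁ θ₂ a, |pol θ₁ a - pol θ₂ a| ≤ k₁ * ‖θ₁ - θ₂‖)
    (δ : EuclideanSpace ℝ (Fin N) → ℝ)
    (hδ : ∀ θ, δ θ = r + γ * ∑ a : A, pol θ a * ⟪θ, φ' a⟫ - ⟪θ, φ⟫)
    (R : ℝ) (hR : 0 < R)
    (θ₁ θ₂ : EuclideanSpace ℝ (Fin N)) (hθ₁ : ‖θ₁‖ ≤ R) (hθ₂ : ‖θ₂‖ ≤ R) :
    |δ θ₁ - δ θ₂| ≤ (1 + γ + γ * R * (Fintype.card A) * k₁) * ‖θ₁ - θ₂‖ := by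
  have inner_bd : ∀ x y : EuclideanSpace ℝ (Fin N), ‖y‖ ≤ 1 → |⟪x, y⟫| ≤ ‖x‖ := by
    intro x y hy
    calc |⟪x, y⟫| ≤ ‖x‖ * ‖y‖ := abs_real_inner_le_norm x y
      _ ≤ ‖x‖ := mul_le_of_le_one_right (norm_nonneg x) hy
  have hS : (∑ a : A, pol θ₁ a * ⟪θ₁, φ' a⟫) - ∑ a : A, pol θ₂ a * ⟪θ₂, φ' a⟫
      = (∑ a : A, pol θ₁ a * ⟪θ₁ - θ₂, φ' a⟫)
        + ∑ a : A, (pol θ₁ a - pol θ₂ a) * ⟪θ₂, φ' a⟫ := by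
    rw [← Finset.sum_sub_distrib, ← Finset.sum_add_distrib]
    refine Finset.sum_congr rfl fun a _ => ?_
    rw [inner_sub_left]
    ring
  have h1 : |∑ a : A, pol θ₁ a * ⟪θ₁ - θ₂, φ' a⟫| ≤ ‖θ₁ - θ₂‖ := by
    calc |∑ a : A, pol θ₁ a * ⟪θ₁ - θ₂, φ' a⟫|
        ≤ ∑ a : A, |pol θ₁ a * ⟪θ₁ - θ₂, φ' a⟫| := Finset.abs_sum_le_sum_abs _ _
      _ ≤ ∑ a : A, pol θ₁ a * ‖θ₁ - θ₂‖ := by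
          refine Finset.sum_le_sum fun a _ => ?_
          rw [abs_mul, abs_of_nonneg (hpol_nonneg θ₁ a)]
          exact mul_le_mul_of_nonneg_left (inner_bd _ _ (hφ' a)) (hpol_nonneg θ₁ a)
      _ = ‖θ₁ - θ₂‖ := by rw [← Finset.sum_mul, hpol_sum, one_mul]
  have h2 : |∑ a : A, (pol θ₁ a - pol θ₂ a) * ⟪θ₂, φ' a⟫|
      ≤ (Fintype.card A) * (k₁ * ‖θ₁ - θ₂‖ * R) := by
    calc |∑ a : A, (pol θ₁ a - pol θ₂ a) * ⟪θ₂, φ' a⟫|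
        ≤ ∑ a : A, |(pol θ₁ a - pol θ₂ a) * ⟪θ₂, φ' a⟫| := Finset.abs_sum_le_sum_abs _ _
      _ ≤ ∑ _a : A, k₁ * ‖θ₁ - θ₂‖ * R := by
          refine Finset.sum_le_sum fun a _ => ?_
          rw [abs_mul]
          exact mul_le_mul (hpol_lip θ₁ θ₂ a) ((inner_bd _ _ (hφ' a)).trans hθ₂)
            (abs_nonneg _) ((abs_nonneg _).trans (hpol_lip θ₁ θ₂ a))
      _ = (Fintype.card A) * (k₁ * ‖θ₁ - θ₂‖ * R) := by simp
  have h3 := inner_bd (θ₁ - θ₂) φ hφ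
  have hd : δ θ₁ - δ θ₂ = γ * ((∑ a : A, pol θ₁ a * ⟪θ₁ - θ₂, φ' a⟫)
        + ∑ a : A, (pol θ₁ a - pol θ₂ a) * ⟪θ₂, φ' a⟫) - ⟪θ₁ - θ₂, φ⟫ := by
    rw [← hS, hδ, hδ, inner_sub_left]
    ring
  rw [hd]
  have h4 := mul_le_mul_of_nonneg_left ((abs_add_le _ _).trans (add_le_add h1 h2)) hγ.1.le
  refine (abs_sub _ _).trans ?_
  rw [abs_mul, abs_of_pos hγ.1]
  linarith
end

section
/- For all θ₁, θ₂ ∈ ℝ^N with ‖θ₁‖ ≤ R and ‖θ₂‖ ≤ R, the vectors φ̂(θ) = Σ_{a∈A} ( ⟨θ, φ'_a⟩ ∇π_θ(a) + π_θ(a) φ'_a ) satisfy ‖φ̂(θ₁) − φ̂(θ₂)‖ ≤ |A|(2k₁ + k₂R)‖θ₁ − θ₂‖, where |A| is the cardinality of A. -/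
open scoped RealInnerProductSpace BigOperators

/-- Lipschitz continuity of `φ̂(θ) = Σ_a (⟨θ, φ'_a⟩ ∇π_θ(a) + π_θ(a) φ'_a)`:
for `‖θ₁‖ ≤ R`, `‖θ₂‖ ≤ R`, `‖φ̂(θ₁) − φ̂(θ₂)‖ ≤ |A|(2k₁ + k₂R)‖θ₁ − θ₂‖`. -/
theorem phihat_lipschitz (N : ℕ) {A : Type*} [Fintype A] [Nonempty A]
    (φ' : A → EuclideanSpace ℝ (Fin N)) (hφ' : ∀ a, ‖φ' a‖ ≤ 1)
    (pol : EuclideanSpace ℝ (Fin N) → A → ℝ)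
    (hpol_nonneg : ∀ θ a, 0 ≤ pol θ a)
    (hpol_sum : ∀ θ, ∑ a : A, pol θ a = 1)
    (hpol_diff : ∀ θ a, DifferentiableAt ℝ (fun θ' => pol θ' a) θ)
    (k₁ k₂ : ℝ)
    (hpol_grad : ∀ θ a, ‖gradient (fun θ' => pol θ' a) θ‖ ≤ k₁)
    (hpol_smooth : ∀ θ₁ θ₂ a,
      ‖gradient (fun θ' => pol θ' a) θ₁ - gradient (fun θ' => pol θ' a) θ₂‖ ≤
        k₂ * ‖θ₁ - θ₂‖)
    (phihat : EuclideanSpace ℝ (Fin N) → EuclideanSpace ℝ (Fin N))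
    (hphihat : ∀ θ, phihat θ = ∑ a : A,
      (⟪θ, φ' a⟫ • gradient (fun θ' => pol θ' a) θ + pol θ a • φ' a))
    (R : ℝ) (hR : 0 < R)
    (θ₁ θ₂ : EuclideanSpace ℝ (Fin N)) (hθ₁ : ‖θ₁‖ ≤ R) (hθ₂ : ‖θ₂‖ ≤ R) :
    ‖phihat θ₁ - phihat θ₂‖ ≤ (Fintype.card A) * (2 * k₁ + k₂ * R) * ‖θ₁ - θ₂‖ := by
  have key : ∀ a ∈ (Finset.univ : Finset A),
      ‖(⟪θ₁, φ' a⟫ • gradient (fun θ' => pol θ' a) θ₁ + pol θ₁ a • φ' a) -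
        (⟪θ₂, φ' a⟫ • gradient (fun θ' => pol θ' a) θ₂ + pol θ₂ a • φ' a)‖ ≤
        (2 * k₁ + k₂ * R) * ‖θ₁ - θ₂‖ := by
    intro a _
    have hg := hpol_grad θ₂ a
    have hs := hpol_smooth θ₁ θ₂ a
    have hlip : ‖pol θ₁ a - pol θ₂ a‖ ≤ k₁ * ‖θ₁ - θ₂‖ := by
      refine Convex.norm_image_sub_le_of_norm_fderiv_le (𝕜 := ℝ) (s := Set.univ)
        (f := fun θ' => pol θ' a) (fun x _ => hpol_diff x a) (fun x _ => ?_)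
        convex_univ (Set.mem_univ θ₂) (Set.mem_univ θ₁)
      have h := hpol_grad x a
      unfold gradient at h
      rwa [LinearIsometryEquiv.norm_map] at h
    generalize gradient (fun θ' => pol θ' a) θ₁ = g₁ at *
    generalize gradient (fun θ' => pol θ' a) θ₂ = g₂ at *
    have hi1 : ‖⟪θ₁, φ' a⟫‖ ≤ R := by
      calc ‖⟪θ₁, φ' a⟫‖ ≤ ‖θ₁‖ * ‖φ' a‖ := norm_inner_le_norm _ _
        _ ≤ R * 1 := mul_le_mul hθ₁ (hφ' a) (norm_nonneg _) hR.le
        _ = R := mul_one R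
    have hi2 : ‖⟪θ₁ - θ₂, φ' a⟫‖ ≤ ‖θ₁ - θ₂‖ := by
      calc ‖⟪θ₁ - θ₂, φ' a⟫‖ ≤ ‖θ₁ - θ₂‖ * ‖φ' a‖ := norm_inner_le_norm _ _
        _ ≤ ‖θ₁ - θ₂‖ * 1 := mul_le_mul_of_nonneg_left (hφ' a) (norm_nonneg _)
        _ = ‖θ₁ - θ₂‖ := mul_one _
    have e : (⟪θ₁, φ' a⟫ • g₁ + pol θ₁ a • φ' a) - (⟪θ₂, φ' a⟫ • g₂ + pol θ₂ a • φ' a) =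
        ⟪θ₁, φ' a⟫ • (g₁ - g₂) + ⟪θ₁ - θ₂, φ' a⟫ • g₂ + (pol θ₁ a - pol θ₂ a) • φ' a := by
      rw [inner_sub_left]
      module
    rw [e]
    refine (norm_add₃_le).trans ?_
    rw [norm_smul, norm_smul, norm_smul]
    have h1 := mul_le_mul hi1 hs (norm_nonneg _) hR.le
    have h2 := mul_le_mul hi2 hg (norm_nonneg _) (norm_nonneg _)
    have h3 := mul_le_mul hlip (hφ' a) (norm_nonneg _) ((norm_nonneg _).trans hlip)
    linarith
  rw [hphihat, hphihat, ← Finset.sum_sub_distrib]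
  refine (norm_sum_le_of_le _ key).trans (le_of_eq ?_)
  rw [Finset.sum_const, nsmul_eq_mul, Finset.card_univ, mul_assoc]
end

section
/- For every θ ∈ ℝ^N with ‖θ‖ ≤ R and all ω₁, ω₂ ∈ ℝ^N, the stochastic update direction G(θ, ω) = δ(θ)φ − γ⟨ω, φ⟩φ̂(θ) satisfies ‖G(θ, ω₁) − G(θ, ω₂)‖ ≤ γ(|A| R k₁ + 1)‖ω₁ − ω₂‖, where |A| is the cardinality of A. -/
open scoped RealInnerProductSpace BigOperators

/-- Lipschitz continuity in `ω` of the update direction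
`G(θ, ω) = δ(θ)φ − γ⟨ω, φ⟩φ̂(θ)`:
for `‖θ‖ ≤ R`, `‖G(θ, ω₁) − G(θ, ω₂)‖ ≤ γ(|A| R k₁ + 1)‖ω₁ − ω₂‖`. -/
theorem G_lipschitz_in_omega (N : ℕ) {A : Type*} [Fintype A] [Nonempty A]
    (φ : EuclideanSpace ℝ (Fin N)) (hφ : ‖φ‖ ≤ 1)
    (φ' : A → EuclideanSpace ℝ (Fin N)) (hφ' : ∀ a, ‖φ' a‖ ≤ 1)
    (γ : ℝ) (hγ : γ ∈ Set.Ioo (0 : ℝ) 1)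
    (r rmax : ℝ) (hr : 0 ≤ r) (hrmax : r ≤ rmax)
    (pol : EuclideanSpace ℝ (Fin N) → A → ℝ)
    (hpol_nonneg : ∀ θ a, 0 ≤ pol θ a)
    (hpol_sum : ∀ θ, ∑ a : A, pol θ a = 1)
    (hpol_diff : ∀ θ a, DifferentiableAt ℝ (fun θ' => pol θ' a) θ)
    (k₁ : ℝ)
    (hpol_grad : ∀ θ a, ‖gradient (fun θ' => pol θ' a) θ‖ ≤ k₁)
    (δ : EuclideanSpace ℝ (Fin N) → ℝ)
    (hδ : ∀ θ, δ θ = r + γ * ∑ a : A, pol θ a * ⟪θ, φ' a⟫ - ⟪θ, φ⟫)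
    (phihat : EuclideanSpace ℝ (Fin N) → EuclideanSpace ℝ (Fin N))
    (hphihat : ∀ θ, phihat θ = ∑ a : A,
      (⟪θ, φ' a⟫ • gradient (fun θ' => pol θ' a) θ + pol θ a • φ' a))
    (G : EuclideanSpace ℝ (Fin N) → EuclideanSpace ℝ (Fin N) → EuclideanSpace ℝ (Fin N))
    (hG : ∀ θ ω, G θ ω = δ θ • φ - (γ * ⟪ω, φ⟫) • phihat θ)
    (R : ℝ) (hR : 0 < R)
    (θ : EuclideanSpace ℝ (Fin N)) (hθ : ‖θ‖ ≤ R)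
    (ω₁ ω₂ : EuclideanSpace ℝ (Fin N)) :
    ‖G θ ω₁ - G θ ω₂‖ ≤ γ * ((Fintype.card A) * R * k₁ + 1) * ‖ω₁ - ω₂‖ := by
  have hinner : ∀ (x y : EuclideanSpace ℝ (Fin N)), ‖y‖ ≤ 1 → |(⟪x, y⟫ : ℝ)| ≤ ‖x‖ := by
    intro x y hy
    calc |(⟪x, y⟫ : ℝ)| ≤ ‖x‖ * ‖y‖ := abs_real_inner_le_norm x y
      _ ≤ ‖x‖ * 1 := mul_le_mul_of_nonneg_left hy (norm_nonneg x)
      _ = ‖x‖ := mul_one _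
  have hhat : ‖phihat θ‖ ≤ (Fintype.card A) * R * k₁ + 1 := by
    rw [hphihat]
    calc ‖∑ a : A, ((⟪θ, φ' a⟫ : ℝ) • gradient (fun θ' => pol θ' a) θ + pol θ a • φ' a)‖
        ≤ ∑ a : A, (R * k₁ + pol θ a) := by
          apply norm_sum_le_of_le
          intro a _
          refine (norm_add_le _ _).trans (add_le_add ?_ ?_)
          · rw [norm_smul, Real.norm_eq_abs]
            exact mul_le_mul ((hinner _ _ (hφ' a)).trans hθ) (hpol_grad θ a)
              (norm_nonneg _) hR.le
          · rw [norm_smul, Real.norm_eq_abs, abs_of_nonneg (hpol_nonneg θ a)]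
            exact mul_le_of_le_one_right (hpol_nonneg θ a) (hφ' a)
      _ = (Fintype.card A) * R * k₁ + 1 := by
          rw [Finset.sum_add_distrib, hpol_sum]
          simp [mul_assoc]
  have hdiff : G θ ω₁ - G θ ω₂ = -((γ * ⟪ω₁ - ω₂, φ⟫) • phihat θ) := by
    rw [hG, hG, inner_sub_left]
    module
  rw [hdiff, norm_neg, norm_smul, Real.norm_eq_abs, abs_mul, abs_of_pos hγ.1]
  calc γ * |(⟪ω₁ - ω₂, φ⟫ : ℝ)| * ‖phihat θ‖
      ≤ γ * ‖ω₁ - ω₂‖ * ((Fintype.card A) * R * k₁ + 1) :=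
        mul_le_mul (mul_le_mul_of_nonneg_left (hinner _ _ hφ) hγ.1.le) hhat
          (norm_nonneg _) (mul_nonneg hγ.1.le (norm_nonneg _))
    _ = _ := by ring
end

section
/- For all θ₁, θ₂ ∈ ℝ^N with ‖θ₁‖ ≤ R and ‖θ₂‖ ≤ R, ‖G(θ₁, ω*(θ₁)) − G(θ₂, ω*(θ₂))‖ ≤ k₃‖θ₁ − θ₂‖, where k₃ = (1 + γ + γR|A|k₁) + γ(1/λ)|A|(2k₁ + k₂R)(r_max + γR + R) + γ(1/λ)(1 + |A|Rk₁)(1 + γ + γR|A|k₁) and |A| is the cardinality of A. -/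
open scoped RealInnerProductSpace BigOperators

/-- Lipschitz continuity of `θ ↦ G(θ, ω*(θ))`:
for `‖θ₁‖ ≤ R`, `‖θ₂‖ ≤ R`, `‖G(θ₁, ω*(θ₁)) − G(θ₂, ω*(θ₂))‖ ≤ k₃‖θ₁ − θ₂‖` with
`k₃ = (1 + γ + γR|A|k₁) + γ(1/λ)|A|(2k₁ + k₂R)(r_max + γR + R)
      + γ(1/λ)(1 + |A|Rk₁)(1 + γ + γR|A|k₁)`. -/
theorem G_omega_star_lipschitz (N : ℕ) {A : Type*} [Fintype A] [Nonempty A]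
    (φ : EuclideanSpace ℝ (Fin N)) (hφ : ‖φ‖ ≤ 1)
    (φ' : A → EuclideanSpace ℝ (Fin N)) (hφ' : ∀ a, ‖φ' a‖ ≤ 1)
    (γ : ℝ) (hγ : γ ∈ Set.Ioo (0 : ℝ) 1)
    (r rmax : ℝ) (hr : 0 ≤ r) (hrmax : r ≤ rmax)
    (pol : EuclideanSpace ℝ (Fin N) → A → ℝ)
    (hpol_nonneg : ∀ θ a, 0 ≤ pol θ a)
    (hpol_sum : ∀ θ, ∑ a : A, pol θ a = 1)
    (hpol_diff : ∀ θ a, DifferentiableAt ℝ (fun θ' => pol θ' a) θ)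
    (k₁ k₂ : ℝ)
    (hpol_grad : ∀ θ a, ‖gradient (fun θ' => pol θ' a) θ‖ ≤ k₁)
    (hpol_smooth : ∀ θ₁ θ₂ a,
      ‖gradient (fun θ' => pol θ' a) θ₁ - gradient (fun θ' => pol θ' a) θ₂‖ ≤
        k₂ * ‖θ₁ - θ₂‖)
    (δ : EuclideanSpace ℝ (Fin N) → ℝ)
    (hδ : ∀ θ, δ θ = r + γ * ∑ a : A, pol θ a * ⟪θ, φ' a⟫ - ⟪θ, φ⟫)
    (phihat : EuclideanSpace ℝ (Fin N) → EuclideanSpace ℝ (Fin N))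
    (hphihat : ∀ θ, phihat θ = ∑ a : A,
      (⟪θ, φ' a⟫ • gradient (fun θ' => pol θ' a) θ + pol θ a • φ' a))
    (G : EuclideanSpace ℝ (Fin N) → EuclideanSpace ℝ (Fin N) → EuclideanSpace ℝ (Fin N))
    (hG : ∀ θ ω, G θ ω = δ θ • φ - (γ * ⟪ω, φ⟫) • phihat θ)
    (R lam : ℝ) (hR : 0 < R) (hlam : 0 < lam)
    (ωstar : EuclideanSpace ℝ (Fin N) → EuclideanSpace ℝ (Fin N))
    (hωstar_bound : ∀ θ, ‖θ‖ ≤ R → ‖ωstar θ‖ ≤ (1 / lam) * (rmax + γ * R + R))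
    (hωstar_lip : ∀ θ₁ θ₂, ‖θ₁‖ ≤ R → ‖θ₂‖ ≤ R →
      ‖ωstar θ₁ - ωstar θ₂‖ ≤
        (1 / lam) * (1 + γ + γ * R * (Fintype.card A) * k₁) * ‖θ₁ - θ₂‖)
    (θ₁ θ₂ : EuclideanSpace ℝ (Fin N)) (hθ₁ : ‖θ₁‖ ≤ R) (hθ₂ : ‖θ₂‖ ≤ R) :
    ‖G θ₁ (ωstar θ₁) - G θ₂ (ωstar θ₂)‖ ≤
      ((1 + γ + γ * R * (Fintype.card A) * k₁)
        + γ * (1 / lam) * (Fintype.card A) * (2 * k₁ + k₂ * R) * (rmax + γ * R + R)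
        + γ * (1 / lam) * (1 + (Fintype.card A) * R * k₁)
            * (1 + γ + γ * R * (Fintype.card A) * k₁)) * ‖θ₁ - θ₂‖ := by
  have hγ0 : 0 ≤ γ := hγ.1.le
  set d := ‖θ₁ - θ₂‖ with hd
  have hd0 : 0 ≤ d := norm_nonneg _
  have hk1 : 0 ≤ k₁ := (norm_nonneg _).trans (hpol_grad θ₁ (Classical.arbitrary A))
  set g : A → EuclideanSpace ℝ (Fin N) → EuclideanSpace ℝ (Fin N) :=
    fun a θ => gradient (fun θ' => pol θ' a) θ with hg
  set n : ℝ := (Fintype.card A : ℝ) with hn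
  have hn0 : 0 ≤ n := Nat.cast_nonneg _
  have hinner : ∀ (x y : EuclideanSpace ℝ (Fin N)) (c : ℝ), ‖y‖ ≤ 1 → ‖x‖ ≤ c →
      |⟪x, y⟫| ≤ c := by
    intro x y c hy hx
    calc |⟪x, y⟫| ≤ ‖x‖ * ‖y‖ := abs_real_inner_le_norm x y
      _ ≤ ‖x‖ * 1 := by gcongr
      _ ≤ c := by linarith
  have hlip : ∀ a, |pol θ₁ a - pol θ₂ a| ≤ k₁ * d := by
    intro a
    have h := Convex.norm_image_sub_le_of_norm_fderiv_le (𝕜 := ℝ)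
      (f := fun θ' => pol θ' a) (C := k₁) (s := Set.univ) (x := θ₂) (y := θ₁)
      (fun x _ => hpol_diff x a)
      (fun x _ => by
        have h2 := hpol_grad x a
        rwa [gradient, LinearIsometryEquiv.norm_map] at h2)
      convex_univ (Set.mem_univ _) (Set.mem_univ _)
    simpa [Real.norm_eq_abs] using h
  -- TD error is Lipschitz
  have hδl : |δ θ₁ - δ θ₂| ≤ (1 + γ + γ * R * n * k₁) * d := by
    have e : δ θ₁ - δ θ₂ = γ * ∑ a : A, (pol θ₁ a * ⟪θ₁ - θ₂, φ' a⟫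
        + (pol θ₁ a - pol θ₂ a) * ⟪θ₂, φ' a⟫) - ⟪θ₁ - θ₂, φ⟫ := by
      have e1 : ∑ a : A, (pol θ₁ a * ⟪θ₁ - θ₂, φ' a⟫
        + (pol θ₁ a - pol θ₂ a) * ⟪θ₂, φ' a⟫) =
          ∑ a : A, pol θ₁ a * ⟪θ₁, φ' a⟫ - ∑ a : A, pol θ₂ a * ⟪θ₂, φ' a⟫ := by
        rw [← Finset.sum_sub_distrib]
        refine Finset.sum_congr rfl fun a _ => ?_
        rw [inner_sub_left]; ring
      rw [e1, hδ, hδ, inner_sub_left]; ring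
    have hs : |∑ a : A, (pol θ₁ a * ⟪θ₁ - θ₂, φ' a⟫
        + (pol θ₁ a - pol θ₂ a) * ⟪θ₂, φ' a⟫)| ≤ d + n * (k₁ * d * R) := by
      calc _ ≤ ∑ a : A, |pol θ₁ a * ⟪θ₁ - θ₂, φ' a⟫
            + (pol θ₁ a - pol θ₂ a) * ⟪θ₂, φ' a⟫| := Finset.abs_sum_le_sum_abs _ _
        _ ≤ ∑ a : A, (pol θ₁ a * d + k₁ * d * R) := by
          refine Finset.sum_le_sum fun a _ => (abs_add_le _ _).trans ?_
          rw [abs_mul, abs_mul, abs_of_nonneg (hpol_nonneg θ₁ a)]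
          exact add_le_add
            (mul_le_mul_of_nonneg_left (hinner _ _ _ (hφ' a) le_rfl) (hpol_nonneg θ₁ a))
            (mul_le_mul (hlip a) (hinner _ _ _ (hφ' a) hθ₂) (abs_nonneg _) (by positivity))
        _ = d + n * (k₁ * d * R) := by
          rw [Finset.sum_add_distrib, ← Finset.sum_mul, hpol_sum]
          simp [hn]
    have h3 := hinner (θ₁ - θ₂) φ d hφ le_rfl
    rw [e]
    calc _ ≤ |γ * ∑ a : A, (pol θ₁ a * ⟪θ₁ - θ₂, φ' a⟫
        + (pol θ₁ a - pol θ₂ a) * ⟪θ₂, φ' a⟫)| + |⟪θ₁ - θ₂, φ⟫| := abs_sub _ _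
      _ ≤ γ * (d + n * (k₁ * d * R)) + d := by
        rw [abs_mul, abs_of_nonneg hγ0]
        exact add_le_add (mul_le_mul_of_nonneg_left hs hγ0) h3
      _ = _ := by ring
  -- bound on phihat
  have hPb : ‖phihat θ₂‖ ≤ 1 + n * R * k₁ := by
    rw [hphihat]
    calc _ ≤ ∑ a : A, ‖⟪θ₂, φ' a⟫ • g a θ₂ + pol θ₂ a • φ' a‖ := norm_sum_le _ _
      _ ≤ ∑ a : A, (R * k₁ + pol θ₂ a * 1) := by
        refine Finset.sum_le_sum fun a _ => (norm_add_le _ _).trans ?_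
        rw [norm_smul, norm_smul, Real.norm_eq_abs, Real.norm_eq_abs,
          abs_of_nonneg (hpol_nonneg θ₂ a)]
        exact add_le_add
          (mul_le_mul (hinner _ _ _ (hφ' a) hθ₂) (hpol_grad θ₂ a) (norm_nonneg _) hR.le)
          (mul_le_mul_of_nonneg_left (hφ' a) (hpol_nonneg θ₂ a))
      _ = _ := by
        simp only [mul_one]
        rw [Finset.sum_add_distrib, hpol_sum]
        simp [hn]; ring
  -- phihat is Lipschitz
  have hPl : ‖phihat θ₁ - phihat θ₂‖ ≤ n * (2 * k₁ + k₂ * R) * d := by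
    rw [hphihat, hphihat, ← Finset.sum_sub_distrib]
    calc _ ≤ ∑ a : A, ‖(⟪θ₁, φ' a⟫ • g a θ₁ + pol θ₁ a • φ' a)
            - (⟪θ₂, φ' a⟫ • g a θ₂ + pol θ₂ a • φ' a)‖ := norm_sum_le _ _
      _ ≤ ∑ a : A, (d * k₁ + R * (k₂ * d) + k₁ * d * 1) := by
        refine Finset.sum_le_sum fun a _ => ?_
        have e : (⟪θ₁, φ' a⟫ • g a θ₁ + pol θ₁ a • φ' a)
            - (⟪θ₂, φ' a⟫ • g a θ₂ + pol θ₂ a • φ' a) =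
            ⟪θ₁ - θ₂, φ' a⟫ • g a θ₁ + ⟪θ₂, φ' a⟫ • (g a θ₁ - g a θ₂)
              + (pol θ₁ a - pol θ₂ a) • φ' a := by
          rw [inner_sub_left]; module
        rw [e]
        refine (norm_add₃_le).trans ?_
        rw [norm_smul, norm_smul, norm_smul, Real.norm_eq_abs, Real.norm_eq_abs,
          Real.norm_eq_abs]
        exact add_le_add (add_le_add
          (mul_le_mul (hinner _ _ _ (hφ' a) le_rfl) (hpol_grad θ₁ a) (norm_nonneg _) hd0)
          (mul_le_mul (hinner _ _ _ (hφ' a) hθ₂) (hpol_smooth θ₁ θ₂ a) (norm_nonneg _) hR.le))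
          (mul_le_mul (hlip a) (hφ' a) (norm_nonneg _) (by positivity))
      _ = _ := by
        simp [hn]; ring
  have hw1 := hinner _ φ _ hφ (hωstar_bound θ₁ hθ₁)
  have hw2 := hinner _ φ _ hφ (hωstar_lip θ₁ θ₂ hθ₁ hθ₂)
  have e : G θ₁ (ωstar θ₁) - G θ₂ (ωstar θ₂) = (δ θ₁ - δ θ₂) • φ
      + (-(γ * ⟪ωstar θ₁, φ⟫)) • (phihat θ₁ - phihat θ₂)
      + (-(γ * ⟪ωstar θ₁ - ωstar θ₂, φ⟫)) • phihat θ₂ := by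
    rw [hG, hG, inner_sub_left]; module
  rw [e]
  refine (norm_add₃_le).trans ?_
  rw [norm_smul, norm_smul, norm_smul, Real.norm_eq_abs, Real.norm_eq_abs,
    Real.norm_eq_abs, abs_neg, abs_neg, abs_mul, abs_mul, abs_of_nonneg hγ0]
  have hw1' := mul_le_mul_of_nonneg_left hw1 hγ0
  have hw2' := mul_le_mul_of_nonneg_left hw2 hγ0
  have t1 := mul_le_mul hδl hφ (norm_nonneg _) ((abs_nonneg _).trans hδl)
  have t2 := mul_le_mul hw1' hPl (norm_nonneg _) ((mul_nonneg hγ0 (abs_nonneg _)).trans hw1')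
  have t3 := mul_le_mul hw2' hPb (norm_nonneg _) ((mul_nonneg hγ0 (abs_nonneg _)).trans hw2')
  refine (add_le_add (add_le_add t1 t2) t3).trans (le_of_eq ?_)
  ring
end

section
/- For all θ, θ₁, θ₂ ∈ ℝ^N with ‖θ‖ ≤ R, ‖θ₁‖ ≤ R, ‖θ₂‖ ≤ R, and all z, z₁, z₂ ∈ ℝ^N with ‖z‖ ≤ 2R, ‖z₁‖ ≤ 2R, ‖z₂‖ ≤ 2R, the function ζ_{f₂}(θ, z) = ⟨z, f₂(θ)⟩ with f₂(θ) = (δ(θ) − ⟨φ, ω*(θ)⟩)φ satisfies |ζ_{f₂}(θ, z)| ≤ 2R c_{f₂} and |ζ_{f₂}(θ₁, z₁) − ζ_{f₂}(θ₂, z₂)| ≤ k_{f₂}‖θ₁ − θ₂‖ + c_{f₂}‖z₁ − z₂‖, where c_{f₂} = (r_max + (1+γ)R)(1 + 1/λ), k_{f₂} = 2R(1 + γ + γRk₁|A|)(1 + 1/λ), and |A| is the cardinality of A. -/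
open scoped RealInnerProductSpace BigOperators

/-- Bounds on `ζ_{f₂}(θ, z) = ⟨z, f₂(θ)⟩` with `f₂(θ) = (δ(θ) − ⟨φ, ω*(θ)⟩)φ`:
for `‖θ‖ ≤ R` and `‖z‖ ≤ 2R`, `|ζ_{f₂}(θ, z)| ≤ 2R c_{f₂}`, and `ζ_{f₂}` is jointly
Lipschitz: `|ζ_{f₂}(θ₁, z₁) − ζ_{f₂}(θ₂, z₂)| ≤ k_{f₂}‖θ₁ − θ₂‖ + c_{f₂}‖z₁ − z₂‖`. -/
theorem zeta_f2_bounds (N : ℕ) {A : Type*} [Fintype A] [Nonempty A]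
    (φ : EuclideanSpace ℝ (Fin N)) (hφ : ‖φ‖ ≤ 1)
    (φ' : A → EuclideanSpace ℝ (Fin N)) (hφ' : ∀ a, ‖φ' a‖ ≤ 1)
    (γ : ℝ) (hγ : γ ∈ Set.Ioo (0 : ℝ) 1)
    (r rmax : ℝ) (hr : 0 ≤ r) (hrmax : r ≤ rmax)
    (pol : EuclideanSpace ℝ (Fin N) → A → ℝ)
    (hpol_nonneg : ∀ θ a, 0 ≤ pol θ a)
    (hpol_sum : ∀ θ, ∑ a : A, pol θ a = 1)
    (k₁ : ℝ)
    (hpol_lip : ∀ θ₁ θ₂ a, |pol θ₁ a - pol θ₂ a| ≤ k₁ * ‖θ₁ - θ₂‖)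
    (δ : EuclideanSpace ℝ (Fin N) → ℝ)
    (hδ : ∀ θ, δ θ = r + γ * ∑ a : A, pol θ a * ⟪θ, φ' a⟫ - ⟪θ, φ⟫)
    (R lam : ℝ) (hR : 0 < R) (hlam : 0 < lam)
    (ωstar : EuclideanSpace ℝ (Fin N) → EuclideanSpace ℝ (Fin N))
    (hωstar_bound : ∀ θ, ‖θ‖ ≤ R → ‖ωstar θ‖ ≤ (1 / lam) * (rmax + (1 + γ) * R))
    (hωstar_lip : ∀ θ₁ θ₂, ‖θ₁‖ ≤ R → ‖θ₂‖ ≤ R →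
      ‖ωstar θ₁ - ωstar θ₂‖ ≤
        (1 / lam) * (1 + γ + γ * R * (Fintype.card A) * k₁) * ‖θ₁ - θ₂‖)
    (f₂ : EuclideanSpace ℝ (Fin N) → EuclideanSpace ℝ (Fin N))
    (hf₂ : ∀ θ, f₂ θ = (δ θ - ⟪φ, ωstar θ⟫) • φ)
    (ζ : EuclideanSpace ℝ (Fin N) → EuclideanSpace ℝ (Fin N) → ℝ)
    (hζ : ∀ θ z, ζ θ z = ⟪z, f₂ θ⟫) :
    (∀ θ z : EuclideanSpace ℝ (Fin N), ‖θ‖ ≤ R → ‖z‖ ≤ 2 * R →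
      |ζ θ z| ≤ 2 * R * ((rmax + (1 + γ) * R) * (1 + 1 / lam))) ∧
    (∀ θ₁ θ₂ z₁ z₂ : EuclideanSpace ℝ (Fin N),
      ‖θ₁‖ ≤ R → ‖θ₂‖ ≤ R → ‖z₁‖ ≤ 2 * R → ‖z₂‖ ≤ 2 * R →
      |ζ θ₁ z₁ - ζ θ₂ z₂| ≤
        (2 * R * (1 + γ + γ * R * k₁ * (Fintype.card A)) * (1 + 1 / lam)) * ‖θ₁ - θ₂‖
          + ((rmax + (1 + γ) * R) * (1 + 1 / lam)) * ‖z₁ - z₂‖) := by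
  obtain ⟨hγ0, hγ1⟩ := hγ
  have hin : ∀ x y : EuclideanSpace ℝ (Fin N), ‖y‖ ≤ 1 → |⟪x, y⟫| ≤ ‖x‖ := by
    intro x y hy
    exact (abs_real_inner_le_norm x y).trans (mul_le_of_le_one_right (norm_nonneg x) hy)
  have hζ' : ∀ θ z, ζ θ z = (δ θ - ⟪φ, ωstar θ⟫) * ⟪z, φ⟫ := by
    intro θ z
    rw [hζ, hf₂, real_inner_smul_right]
  have hg : ∀ θ, ‖θ‖ ≤ R →
      |δ θ - ⟪φ, ωstar θ⟫| ≤ (rmax + (1 + γ) * R) * (1 + 1 / lam) := by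
    intro θ hθ
    have h1 : |∑ a : A, pol θ a * ⟪θ, φ' a⟫| ≤ R := by
      calc |∑ a : A, pol θ a * ⟪θ, φ' a⟫| ≤ ∑ a : A, |pol θ a * ⟪θ, φ' a⟫| :=
            Finset.abs_sum_le_sum_abs _ _
        _ ≤ ∑ a : A, pol θ a * R := by
            refine Finset.sum_le_sum fun a _ => ?_
            rw [abs_mul, abs_of_nonneg (hpol_nonneg θ a)]
            exact mul_le_mul_of_nonneg_left ((hin _ _ (hφ' a)).trans hθ) (hpol_nonneg θ a)
        _ = R := by rw [← Finset.sum_mul, hpol_sum, one_mul]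
    have h2 := (hin θ φ hφ).trans hθ
    have h3 := (hin (ωstar θ) φ hφ).trans (hωstar_bound θ hθ)
    rw [real_inner_comm] at h3
    rw [hδ]
    rw [abs_le] at *
    have h4 := mul_le_mul_of_nonneg_left h1.1 hγ0.le
    have h5 := mul_le_mul_of_nonneg_left h1.2 hγ0.le
    constructor <;> linarith [h2.1, h2.2, h3.1, h3.2]
  have hgl : ∀ θ₁ θ₂, ‖θ₁‖ ≤ R → ‖θ₂‖ ≤ R →
      |(δ θ₁ - ⟪φ, ωstar θ₁⟫) - (δ θ₂ - ⟪φ, ωstar θ₂⟫)| ≤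
        (1 + γ + γ * R * k₁ * (Fintype.card A)) * (1 + 1 / lam) * ‖θ₁ - θ₂‖ := by
    intro θ₁ θ₂ hθ₁ hθ₂
    have h1 : |∑ a : A, pol θ₁ a * ⟪θ₁, φ' a⟫ - ∑ a : A, pol θ₂ a * ⟪θ₂, φ' a⟫| ≤
        ‖θ₁ - θ₂‖ + Fintype.card A * (k₁ * ‖θ₁ - θ₂‖ * R) := by
      rw [← Finset.sum_sub_distrib]
      calc |∑ a : A, (pol θ₁ a * ⟪θ₁, φ' a⟫ - pol θ₂ a * ⟪θ₂, φ' a⟫)|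
          ≤ ∑ a : A, |pol θ₁ a * ⟪θ₁, φ' a⟫ - pol θ₂ a * ⟪θ₂, φ' a⟫| :=
            Finset.abs_sum_le_sum_abs _ _
        _ ≤ ∑ a : A, (pol θ₁ a * ‖θ₁ - θ₂‖ + k₁ * ‖θ₁ - θ₂‖ * R) := by
            refine Finset.sum_le_sum fun a _ => ?_
            have e : pol θ₁ a * ⟪θ₁, φ' a⟫ - pol θ₂ a * ⟪θ₂, φ' a⟫ =
                pol θ₁ a * ⟪θ₁ - θ₂, φ' a⟫ + (pol θ₁ a - pol θ₂ a) * ⟪θ₂, φ' a⟫ := by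
              rw [inner_sub_left]; ring
            rw [e]
            refine (abs_add_le _ _).trans (add_le_add ?_ ?_)
            · rw [abs_mul, abs_of_nonneg (hpol_nonneg θ₁ a)]
              exact mul_le_mul_of_nonneg_left (hin _ _ (hφ' a)) (hpol_nonneg θ₁ a)
            · rw [abs_mul]
              exact mul_le_mul (hpol_lip _ _ _) ((hin _ _ (hφ' a)).trans hθ₂) (abs_nonneg _)
                ((abs_nonneg _).trans (hpol_lip θ₁ θ₂ a))
        _ = _ := by
            rw [Finset.sum_add_distrib, ← Finset.sum_mul, hpol_sum, one_mul]
            simp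
    have h2 := hin (θ₁ - θ₂) φ hφ
    have h3 := (hin (ωstar θ₁ - ωstar θ₂) φ hφ).trans (hωstar_lip θ₁ θ₂ hθ₁ hθ₂)
    rw [real_inner_comm, inner_sub_right] at h3
    rw [inner_sub_left] at h2
    rw [hδ, hδ]
    rw [abs_le] at *
    have h4 := mul_le_mul_of_nonneg_left h1.1 hγ0.le
    have h5 := mul_le_mul_of_nonneg_left h1.2 hγ0.le
    constructor <;> linarith [h2.1, h2.2, h3.1, h3.2]
  constructor
  · intro θ z hθ hz
    rw [hζ', abs_mul, mul_comm]
    exact mul_le_mul ((hin _ _ hφ).trans hz) (hg θ hθ) (abs_nonneg _) (by positivity)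
  · intro θ₁ θ₂ z₁ z₂ hθ₁ hθ₂ hz₁ hz₂
    have e : ζ θ₁ z₁ - ζ θ₂ z₂ =
        ((δ θ₁ - ⟪φ, ωstar θ₁⟫) - (δ θ₂ - ⟪φ, ωstar θ₂⟫)) * ⟪z₁, φ⟫ +
          (δ θ₂ - ⟪φ, ωstar θ₂⟫) * ⟪z₁ - z₂, φ⟫ := by
      rw [hζ', hζ', inner_sub_left]; ring
    rw [e]
    refine (abs_add_le _ _).trans (add_le_add ?_ ?_)
    · rw [abs_mul]
      have h := hgl θ₁ θ₂ hθ₁ hθ₂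
      refine (mul_le_mul h ((hin _ _ hφ).trans hz₁) (abs_nonneg _)
        ((abs_nonneg _).trans h)).trans (le_of_eq ?_)
      ring
    · rw [abs_mul]
      exact mul_le_mul (hg θ₂ hθ₂) (hin _ _ hφ) (abs_nonneg _)
        ((abs_nonneg _).trans (hg θ₂ hθ₂))
end
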